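/- For every integer L ≥ 2, the multinomial NML regret is log-concave in the sample size: for all integers n ≥ 1, R(L, n−1) · R(L, n+1) ≤ R(L, n)². Equivalently, the ratio R(L, n) / R(L, n−1) is nonincreasing in n for n ≥ 1. -/

import Mathlib

/-!
For `L = l + 2` the regret has the integral representation

  `l! * R(l + 2, n) = ∫ x in [0, ∞), x ^ l * exp (-x) * (1 + x / n) ^ n`,

and the integrand is jointly log-concave in `(n, x)`: the function `n * log (1 + x / n)` is the
perspective of the concave function `log (1 + x)`. By the Prékopa–Leindler inequality its marginal
in `n` is log-concave.

The representation comes from a closed form. Up to the factor `n! / n ^ n`, the regret is the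
coefficient of `z ^ n` in `B(z) ^ L`, where `B(z) = ∑ m ^ m / m! * z ^ m`. An Abel-type convolution
identity (`sum_pow_self_mul_sub_pow`) and induction on `L` give
`∑_{q + k = n} n ^ q / q! * choose (l + k) k` for it (`sum_antidiagonalTuple_eq`). Expanding
`(1 + x / n) ^ n` by the binomial theorem and integrating term by term with
`∫ x ^ m * exp (-x) = m!` yields the same sum (`integral_regretKernel`).

Only the midpoint case of Prékopa–Leindler on the half-line is required
(`integral_mul_integral_le_sq`). It follows from the one-dimensional Brunn–Minkowski inequality for
the superlevel sets (`volume_add_volume_le`) and the layer cake formula. Its pointwise hypothesis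
(`regretKernel_mul_le`) is an instance of the weighted AM-GM inequality.
-/

open Finset

/-- The multinomial NML regret `R(L, n)`: the sum over all count vectors
`(h_1, …, h_L)` with `h_1 + ⋯ + h_L = n` of the maximum likelihood
`(n! / (h_1! ⋯ h_L!)) · ∏_v (h_v / n)^{h_v}` (with the convention `0^0 = 1`). -/
noncomputable def regret (L n : ℕ) : ℝ :=
  ∑ h ∈ Finset.Nat.antidiagonalTuple L n,
    (Nat.multinomial Finset.univ h : ℝ) * ∏ v, ((h v : ℝ) / (n : ℝ)) ^ (h v)

/-! ### A closed form for powers of the series of `m ^ m / m!` -/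

/-- Both sides run over all triples `(a, b, c)` with `a + b + c = n`, of which the outer sum fixes
`a` on the left and `b` on the right. -/
theorem sum_antidiagonal_swap_mid (n : ℕ) (F : ℕ → ℕ → ℕ → ℝ) :
    ∑ p ∈ antidiagonal n, ∑ q ∈ antidiagonal p.2, F p.1 q.1 q.2 =
      ∑ p ∈ antidiagonal n, ∑ q ∈ antidiagonal p.2, F q.1 p.1 q.2 := by
  rw [Finset.sum_sigma', Finset.sum_sigma']
  refine Finset.sum_nbij' (fun x => ⟨(x.2.1, x.1.1 + x.2.2), (x.1.1, x.2.2)⟩)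
    (fun x => ⟨(x.2.1, x.1.1 + x.2.2), (x.1.1, x.2.2)⟩) ?_ ?_ ?_ ?_ ?_
  · rintro ⟨⟨a, r⟩, b, c⟩ h
    simp only [mem_sigma, HasAntidiagonal.mem_antidiagonal] at h ⊢
    exact ⟨by omega, trivial⟩
  · rintro ⟨⟨a, r⟩, b, c⟩ h
    simp only [mem_sigma, HasAntidiagonal.mem_antidiagonal] at h ⊢
    exact ⟨by omega, trivial⟩
  · rintro ⟨⟨a, r⟩, b, c⟩ h
    simp only [mem_sigma, HasAntidiagonal.mem_antidiagonal] at h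
    obtain ⟨h1, rfl⟩ := h
    rfl
  · rintro ⟨⟨a, r⟩, b, c⟩ h
    simp only [mem_sigma, HasAntidiagonal.mem_antidiagonal] at h
    obtain ⟨h1, rfl⟩ := h
    rfl
  · rintro ⟨⟨a, r⟩, b, c⟩ h
    rfl

theorem sum_antidiagonalTuple_succ (L n : ℕ) (b : ℕ → ℝ) :
    ∑ h ∈ Finset.Nat.antidiagonalTuple (L + 1) n, ∏ v, b (h v) =
      ∑ p ∈ antidiagonal n, b p.1 * ∑ h ∈ Finset.Nat.antidiagonalTuple L p.2, ∏ v, b (h v) := by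
  simp_rw [Finset.mul_sum]
  rw [Finset.sum_sigma']
  refine Finset.sum_nbij' (fun h => ⟨(h 0, ∑ v : Fin L, h v.succ), Fin.tail h⟩)
    (fun x => Fin.cons x.1.1 x.2) ?_ ?_ ?_ ?_ ?_
  · intro h hh
    simp only [Finset.Nat.mem_antidiagonalTuple, mem_sigma, HasAntidiagonal.mem_antidiagonal] at hh ⊢
    rw [Fin.sum_univ_succ] at hh
    exact ⟨hh, rfl⟩
  · rintro ⟨⟨a, r⟩, h⟩ hh
    simp only [Finset.Nat.mem_antidiagonalTuple, mem_sigma, HasAntidiagonal.mem_antidiagonal] at hh ⊢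
    rw [Fin.sum_univ_succ]
    simp only [Fin.cons_zero, Fin.cons_succ]
    omega
  · intro h hh
    exact Fin.cons_self_tail h
  · rintro ⟨⟨a, r⟩, h⟩ hh
    simp only [Finset.Nat.mem_antidiagonalTuple, mem_sigma, HasAntidiagonal.mem_antidiagonal] at hh
    obtain ⟨h1, rfl⟩ := hh
    simp
  · intro h hh
    rw [Fin.prod_univ_succ]
    rfl

/-- Up to the factor `j!`, the left side is the `j`-th forward difference of `r ↦ r ^ j` at `0`. -/
theorem sum_pow_self_mul_neg_pow (j : ℕ) :
    ∑ p ∈ antidiagonal j,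
      ((p.1 : ℝ) ^ p.1 / p.1.factorial) * ((-(p.1 : ℝ)) ^ p.2 / p.2.factorial) = 1 := by
  have key : ∑ k ∈ range (j + 1), ((-1 : ℝ) ^ (j - k) * (j.choose k : ℝ)) * (k : ℝ) ^ j
      = j.factorial := by
    have h := fwdDiff_iter_eq_sum_shift (h := (1 : ℝ)) (fun r : ℝ => r ^ j) j 0
    rw [fwdDiff_iter_eq_factorial] at h
    simpa using h.symm
  have hj : (j.factorial : ℝ) ≠ 0 := by positivity
  rw [Finset.Nat.sum_antidiagonal_eq_sum_range_succ
    (f := fun a b => ((a : ℝ) ^ a / a.factorial) * ((-(a : ℝ)) ^ b / b.factorial))]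
  rw [← mul_right_inj' hj, mul_one, Finset.mul_sum]
  refine Eq.trans ?_ key
  refine Finset.sum_congr rfl fun k hk => ?_
  have hk' : k ≤ j := by simpa [Nat.lt_succ_iff] using hk
  rw [Nat.cast_choose ℝ hk', neg_pow (k : ℝ)]
  conv_rhs => rw [← Nat.add_sub_cancel' hk', pow_add]
  rw [Nat.add_sub_cancel' hk']
  field_simp

theorem add_pow_div_factorial (x y : ℝ) (r : ℕ) :
    (x + y) ^ r / r.factorial =
      ∑ q ∈ antidiagonal r, (x ^ q.1 / q.1.factorial) * (y ^ q.2 / q.2.factorial) := by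
  rw [(Commute.all x y).add_pow', Finset.sum_div]
  refine Finset.sum_congr rfl fun q hq => ?_
  rw [HasAntidiagonal.mem_antidiagonal] at hq
  have hr : r.choose q.1 * q.1.factorial * q.2.factorial = r.factorial := by
    rw [← hq, Nat.choose_symm_add, Nat.add_choose_mul_factorial_mul_factorial]
  have hr' : (r.choose q.1 : ℝ) * q.1.factorial * q.2.factorial = r.factorial := by
    exact_mod_cast hr
  rw [← hr', nsmul_eq_mul]
  have : (r.choose q.1 : ℝ) ≠ 0 := by
    have := Nat.choose_pos (n := r) (k := q.1) (by omega)
    positivity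
  field_simp

/-- Abel-type convolution identity
`∑ m ^ m / m! * (y - m) ^ (N - m) / (N - m)! = ∑_{i ≤ N} y ^ i / i!`. It holds coefficientwise
in `y`: after expanding the powers of `y - m`, the coefficient of `y ^ i / i!` is the sum in
`sum_pow_self_mul_neg_pow` for `j = N - i`. -/
theorem sum_pow_self_mul_sub_pow (y : ℝ) (N : ℕ) :
    ∑ p ∈ antidiagonal N,
      ((p.1 : ℝ) ^ p.1 / p.1.factorial) * ((y - p.1) ^ p.2 / p.2.factorial) =
      ∑ p ∈ antidiagonal N, y ^ p.1 / p.1.factorial := by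
  simp_rw [sub_eq_add_neg, add_pow_div_factorial, Finset.mul_sum]
  rw [sum_antidiagonal_swap_mid N (fun a b c => ((a : ℝ) ^ a / a.factorial) *
    ((y ^ b / b.factorial) * ((-(a : ℝ)) ^ c / c.factorial)))]
  refine Finset.sum_congr rfl fun p _ => ?_
  refine Eq.trans ?_ (mul_one (y ^ p.1 / _))
  rw [← sum_pow_self_mul_neg_pow p.2, Finset.mul_sum]
  exact Finset.sum_congr rfl fun q _ => by ring

theorem sum_antidiagonal_choose (l J : ℕ) :
    ∑ p ∈ antidiagonal J, ((l + p.1).choose p.1 : ℝ) = ((l + 1 + J).choose J : ℝ) := by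
  rw [Finset.Nat.sum_antidiagonal_eq_sum_range_succ (f := fun a _ => ((l + a).choose a : ℝ))]
  have h := Nat.sum_range_add_choose J l
  have h2 : (J + l + 1).choose (l + 1) = (l + 1 + J).choose J := by
    rw [show J + l + 1 = l + 1 + J by ring, Nat.choose_symm_add]
  rw [← h2, ← h]
  push_cast
  refine Finset.sum_congr rfl fun a _ => ?_
  rw [add_comm a l, Nat.choose_symm_add]

/-- The coefficient of `z ^ n` in `(∑ m ^ m / m! * z ^ m) ^ (l + 2)`. In the induction on `l` the
new factor is convolved with each monomial of the previous formula separately, through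
`sum_pow_self_mul_sub_pow` at `y = n`. -/
theorem sum_antidiagonalTuple_eq (l n : ℕ) :
    ∑ h ∈ Finset.Nat.antidiagonalTuple (l + 2) n,
        ∏ v, ((h v : ℝ) ^ (h v) / (h v).factorial) =
      ∑ p ∈ antidiagonal n, ((n : ℝ) ^ p.1 / p.1.factorial) * ((l + p.2).choose p.2 : ℝ) := by
  induction l generalizing n with
  | zero =>
    rw [sum_antidiagonalTuple_succ 1 n (fun m => (m : ℝ) ^ m / m.factorial)]
    simp only [Finset.Nat.antidiagonalTuple_one, sum_singleton, Finset.univ_unique,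
      Finset.prod_singleton, zero_add, Nat.choose_self, Nat.cast_one, mul_one]
    rw [← sum_pow_self_mul_sub_pow]
    refine Finset.sum_congr rfl fun p hp => ?_
    rw [HasAntidiagonal.mem_antidiagonal] at hp
    simp [← hp]
  | succ l ih =>
    rw [sum_antidiagonalTuple_succ (l + 2) n (fun m => (m : ℝ) ^ m / m.factorial)]
    simp_rw [ih]
    calc
      _ = ∑ p ∈ antidiagonal n, ∑ q ∈ antidiagonal p.2,
            ((p.1 : ℝ) ^ p.1 / p.1.factorial) *
              ((((n : ℝ) - p.1) ^ q.2 / q.2.factorial) * ((l + q.1).choose q.1 : ℝ)) := by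
        refine Finset.sum_congr rfl fun p hp => ?_
        rw [HasAntidiagonal.mem_antidiagonal] at hp
        rw [Finset.mul_sum, ← Finset.Nat.sum_antidiagonal_swap]
        simp [← hp]
      _ = ∑ p ∈ antidiagonal n, ∑ q ∈ antidiagonal p.2,
            ((l + p.1).choose p.1 : ℝ) * ((n : ℝ) ^ q.1 / q.1.factorial) := by
        rw [sum_antidiagonal_swap_mid n (fun a b c => ((a : ℝ) ^ a / a.factorial) *
              ((((n : ℝ) - a) ^ c / c.factorial) * ((l + b).choose b : ℝ)))]
        refine Finset.sum_congr rfl fun p _ => ?_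
        rw [← Finset.mul_sum, ← sum_pow_self_mul_sub_pow, Finset.mul_sum]
        exact Finset.sum_congr rfl fun q _ => by ring
      _ = _ := by
        rw [sum_antidiagonal_swap_mid n (fun a b _ => ((l + a).choose a : ℝ) *
          ((n : ℝ) ^ b / b.factorial))]
        refine Finset.sum_congr rfl fun p _ => ?_
        rw [← Finset.sum_mul, sum_antidiagonal_choose, mul_comm]

/-! ### A one-dimensional Prékopa–Leindler inequality -/

open MeasureTheory Set in
/-- The one-dimensional Brunn–Minkowski inequality `|A| + |B| ≤ |A + B|`, with `A + B` replaced by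
any set containing all midpoints. The sumset contains the translates `A + min B` and `max A + B`,
which share a single point. -/
theorem volume_add_volume_le {A B S : Set ℝ} (hA : IsCompact A) (hB : IsCompact B)
    (hA0 : A.Nonempty) (hB0 : B.Nonempty) (h : ∀ x ∈ A, ∀ y ∈ B, (x + y) / 2 ∈ S) :
    volume A + volume B ≤ 2 * volume S := by
  obtain ⟨a, ha, haA⟩ := hA.exists_isGreatest hA0
  obtain ⟨b, hb, hbB⟩ := hB.exists_isLeast hB0
  have hS : volume ((fun z : ℝ => (1 / 2) * z) ⁻¹' S) = 2 * volume S := by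
    rw [Real.volume_preimage_mul_left (by norm_num)]
    norm_num
  have hA' : volume ((fun x => x + -b) ⁻¹' A) = volume A := measure_preimage_add_right _ _ _
  have hB' : volume ((fun x => x + -a) ⁻¹' B) = volume B := measure_preimage_add_right _ _ _
  rw [← hS, ← hA', ← hB', ← measure_union₀]
  · refine measure_mono ?_
    rintro z (hz | hz)
    · have := h _ hz b hb
      simp only [Set.mem_preimage]
      convert this using 1
      ring
    · have := h a ha _ hz
      simp only [Set.mem_preimage]
      convert this using 1
      ring
  · exact (hB.measurableSet.preimage (by fun_prop)).nullMeasurableSet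
  · refine measure_mono_null (t := {a + b}) ?_ (by simp)
    rintro z ⟨h1, h2⟩
    have h1' := haA h1
    have h2' := hbB h2
    simp only [mem_singleton_iff]
    linarith

open MeasureTheory Set in
/-- Midpoint case of the Prékopa–Leindler inequality on the half-line, for functions that attain
their maxima. When `f` and `g` are scaled to have maximum `1`, their superlevel sets are nonempty for
the same levels `t ≤ 1`, so Brunn–Minkowski applies level by level; integrating over `t` gives the
arithmetic mean of the integrals, which dominates the geometric mean. -/
theorem integral_mul_integral_le_sq (f g h : ℝ → ℝ)
    (hf : Continuous f) (hg : Continuous g) (hh : Continuous h)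
    (hf0 : ∀ x, 0 ≤ x → 0 ≤ f x) (hg0 : ∀ x, 0 ≤ x → 0 ≤ g x) (hh0 : ∀ x, 0 ≤ x → 0 ≤ h x)
    (hfc : ∀ t, 0 < t → IsCompact {x | 0 ≤ x ∧ t ≤ f x})
    (hgc : ∀ t, 0 < t → IsCompact {x | 0 ≤ x ∧ t ≤ g x})
    (hfi : IntegrableOn f (Ici 0)) (hgi : IntegrableOn g (Ici 0)) (hhi : IntegrableOn h (Ici 0))
    (hfp : ∃ x, 0 ≤ x ∧ 0 < f x) (hgp : ∃ x, 0 ≤ x ∧ 0 < g x)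
    (hfgh : ∀ x y, 0 ≤ x → 0 ≤ y → f x * g y ≤ h ((x + y) / 2) ^ 2) :
    (∫ x in Ici 0, f x) * (∫ x in Ici 0, g x) ≤ (∫ x in Ici 0, h x) ^ 2 := by
  have hmax : ∀ u : ℝ → ℝ, Continuous u → (∀ t, 0 < t → IsCompact {x | 0 ≤ x ∧ t ≤ u x}) →
      (∃ x, 0 ≤ x ∧ 0 < u x) → ∃ x, 0 ≤ x ∧ 0 < u x ∧ ∀ y, 0 ≤ y → u y ≤ u x := by
    rintro u hu huc ⟨x₀, hx₀, hux₀⟩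
    obtain ⟨x, hx, hxm⟩ := (huc _ hux₀).exists_isMaxOn ⟨x₀, hx₀, le_rfl⟩ hu.continuousOn
    refine ⟨x, hx.1, hux₀.trans_le hx.2, fun y hy => ?_⟩
    by_cases hc : u x₀ ≤ u y
    · exact hxm ⟨hy, hc⟩
    · exact (not_le.mp hc).le.trans hx.2
  obtain ⟨xf, hxf, hF, hFm⟩ := hmax f hf hfc hfp
  obtain ⟨xg, hxg, hG, hGm⟩ := hmax g hg hgc hgp
  set F := f xf with hFdef
  set G := g xg with hGdef
  set H := √(F * G) with hHdef
  have hH : 0 < H := Real.sqrt_pos.mpr (mul_pos hF hG)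
  have hH2 : H ^ 2 = F * G := Real.sq_sqrt (mul_pos hF hG).le
  have layer : ∀ (u : ℝ → ℝ) (c : ℝ), Continuous u → (∀ x, 0 ≤ x → 0 ≤ u x) → 0 < c →
      IntegrableOn u (Ici 0) →
      ENNReal.ofReal ((∫ x in Ici 0, u x) / c) =
        ∫⁻ t in Ioi (0 : ℝ), volume {x | 0 ≤ x ∧ t * c ≤ u x} := by
    intro u c hu hu0 hc hui
    have hnn : 0 ≤ᵐ[volume.restrict (Ici (0 : ℝ))] fun x => u x / c := by
      filter_upwards [ae_restrict_mem measurableSet_Ici] with x hx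
      exact div_nonneg (hu0 x hx) hc.le
    rw [← integral_div, ofReal_integral_eq_lintegral_ofReal (hui.div_const c) hnn,
      lintegral_eq_lintegral_meas_le _ hnn (by fun_prop)]
    refine lintegral_congr fun t => ?_
    rw [Measure.restrict_apply
      (measurableSet_le measurable_const (hu.measurable.div_const c))]
    congr 1
    ext x
    simp only [mem_inter_iff, mem_ofPred_eq, Set.mem_Ici, le_div_iff₀ hc]
    exact and_comm
  have hlevel : ∀ t ∈ Ioi (0 : ℝ),
      volume {x | 0 ≤ x ∧ t * F ≤ f x} + volume {x | 0 ≤ x ∧ t * G ≤ g x} ≤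
        2 * volume {x | 0 ≤ x ∧ t * H ≤ h x} := by
    intro t ht
    have ht : 0 < t := ht
    by_cases ht1 : t ≤ 1
    · refine volume_add_volume_le (hfc _ (by positivity)) (hgc _ (by positivity))
        ⟨xf, hxf, mul_le_of_le_one_left hF.le ht1⟩ ⟨xg, hxg, mul_le_of_le_one_left hG.le ht1⟩ ?_
      rintro x ⟨hx0, hx⟩ y ⟨hy0, hy⟩
      have hxy : 0 ≤ (x + y) / 2 := by positivity
      refine ⟨hxy, le_of_sq_le_sq ?_ (hh0 _ hxy)⟩
      calc (t * H) ^ 2 = (t * F) * (t * G) := by rw [mul_pow, hH2]; ring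
        _ ≤ f x * g y := by gcongr; exact hf0 x hx0
        _ ≤ _ := hfgh x y hx0 hy0
    -- Above level `1` both scaled superlevel sets are empty.
    · have e : ∀ (u : ℝ → ℝ) (c : ℝ), 0 < c → (∀ y, 0 ≤ y → u y ≤ c) →
          {x | 0 ≤ x ∧ t * c ≤ u x} = ∅ := by
        intro u c hc hm
        ext x
        simp only [mem_ofPred_eq, mem_empty_iff_false, iff_false, not_and, not_le]
        intro hx
        have := hm x hx
        push Not at ht1
        nlinarith
      rw [e f F hF hFm, e g G hG hGm]
      simp
  have hanti : ∀ (u : ℝ → ℝ) (c : ℝ), 0 < c →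
      Measurable fun t : ℝ => volume {x | 0 ≤ x ∧ t * c ≤ u x} := by
    intro u c hc
    refine Antitone.measurable fun s t hst => measure_mono ?_
    rintro x ⟨hx, hx'⟩
    exact ⟨hx, (mul_le_mul_of_nonneg_right hst hc.le).trans hx'⟩
  have hint : ENNReal.ofReal ((∫ x in Ici 0, f x) / F) + ENNReal.ofReal ((∫ x in Ici 0, g x) / G)
      ≤ 2 * ENNReal.ofReal ((∫ x in Ici 0, h x) / H) := by
    rw [layer f F hf hf0 hF hfi, layer g G hg hg0 hG hgi, layer h H hh hh0 hH hhi,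
      ← lintegral_add_left (hanti f F hF), ← lintegral_const_mul _ (hanti h H hH)]
    exact setLIntegral_mono' measurableSet_Ioi hlevel
  have hA : 0 ≤ ∫ x in Ici 0, f x := setIntegral_nonneg measurableSet_Ici hf0
  have hB : 0 ≤ ∫ x in Ici 0, g x := setIntegral_nonneg measurableSet_Ici hg0
  have hC : 0 ≤ ∫ x in Ici 0, h x := setIntegral_nonneg measurableSet_Ici hh0
  generalize (∫ x in Ici 0, f x) = A at *
  generalize (∫ x in Ici 0, g x) = B at *
  generalize (∫ x in Ici 0, h x) = C at *
  rw [← ENNReal.ofReal_add (by positivity) (by positivity),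
    show (2 : ENNReal) = ENNReal.ofReal 2 by simp, ← ENNReal.ofReal_mul (by norm_num),
    ENNReal.ofReal_le_ofReal_iff (by positivity)] at hint
  have h4 : 4 * (A / F * (B / G)) ≤ 4 * (C / H) ^ 2 := by
    have h0 : 0 ≤ A / F + B / G := by positivity
    nlinarith [sq_nonneg (A / F - B / G), pow_le_pow_left₀ h0 hint 2]
  rw [div_pow, hH2, div_mul_div_comm] at h4
  have hFG : 0 < F * G := mul_pos hF hG
  exact (div_le_div_iff_of_pos_right hFG).mp (by linarith)

/-! ### The integral representation of the regret -/

/-- `R(l + 2, n) = n! / n ^ n * ∑ n ^ q / q! * choose (l + k) k` over `q + k = n`. -/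
theorem regret_eq_sum (l n : ℕ) :
    regret (l + 2) n = (n.factorial / (n : ℝ) ^ n) *
      ∑ p ∈ antidiagonal n, ((n : ℝ) ^ p.1 / p.1.factorial) * ((l + p.2).choose p.2 : ℝ) := by
  rw [← sum_antidiagonalTuple_eq, regret, Finset.mul_sum]
  refine Finset.sum_congr rfl fun h hh => ?_
  rw [Finset.Nat.mem_antidiagonalTuple] at hh
  have hm : (∏ v, ((h v).factorial : ℝ)) * Nat.multinomial Finset.univ h = n.factorial := by
    have := Nat.multinomial_spec Finset.univ h
    rw [hh] at this
    exact_mod_cast this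
  simp_rw [div_pow]
  rw [Finset.prod_div_distrib, Finset.prod_div_distrib, Finset.prod_pow_eq_pow_sum, hh, ← hm]
  have : (∏ v, ((h v).factorial : ℝ)) ≠ 0 := by positivity
  field_simp

/-- The Laplace-type integrand `x ^ l * exp (-x) * (1 + x / n) ^ n`, whose integral over `[0, ∞)`
is `l! * R(l + 2, n)`. For `n = 0` the last factor is `1`, whatever the value of `x / 0`. -/
noncomputable def regretKernel (l n : ℕ) (x : ℝ) : ℝ :=
  x ^ l * Real.exp (-x) * (1 + x / n) ^ n

theorem regretKernel_eq_sum (l n : ℕ) (x : ℝ) :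
    regretKernel l n x =
      ∑ k ∈ range (n + 1), ((n.choose k : ℝ) / (n : ℝ) ^ k) * (x ^ (l + k) * Real.exp (-x)) := by
  rw [regretKernel, add_comm, add_pow, Finset.mul_sum]
  refine Finset.sum_congr rfl fun k _ => ?_
  rw [one_pow, div_pow, pow_add]
  ring

theorem continuous_regretKernel (l n : ℕ) : Continuous (regretKernel l n) := by
  unfold regretKernel
  fun_prop

theorem regretKernel_nonneg (l n : ℕ) (x : ℝ) (hx : 0 ≤ x) : 0 ≤ regretKernel l n x := by
  unfold regretKernel
  positivity

theorem regretKernel_one_pos (l n : ℕ) : 0 < regretKernel l n 1 := by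
  unfold regretKernel
  positivity

theorem integrableOn_pow_mul_exp_neg (m : ℕ) :
    MeasureTheory.IntegrableOn (fun x : ℝ => x ^ m * Real.exp (-x)) (Set.Ici 0) := by
  rw [integrableOn_Ici_iff_integrableOn_Ioi]
  have h := Real.GammaIntegral_convergent (s := m + 1) (by positivity)
  simpa [mul_comm] using h

theorem integral_pow_mul_exp_neg (m : ℕ) :
    ∫ x in Set.Ici (0 : ℝ), x ^ m * Real.exp (-x) = m.factorial := by
  rw [MeasureTheory.integral_Ici_eq_integral_Ioi, ← Real.Gamma_nat_eq_factorial,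
    Real.Gamma_eq_integral (by positivity)]
  simp [mul_comm]

theorem integrableOn_regretKernel (l n : ℕ) :
    MeasureTheory.IntegrableOn (regretKernel l n) (Set.Ici 0) := by
  rw [funext (regretKernel_eq_sum l n)]
  exact MeasureTheory.integrable_finsetSum _
    fun k _ => (integrableOn_pow_mul_exp_neg (l + k)).const_mul _

/-- The kernel is continuous and tends to `0` at infinity. -/
theorem isCompact_regretKernel_superlevel (l n : ℕ) (t : ℝ) (ht : 0 < t) :
    IsCompact {x | 0 ≤ x ∧ t ≤ regretKernel l n x} := by
  have hlim : Filter.Tendsto (regretKernel l n) Filter.atTop (nhds 0) := by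
    rw [funext (regretKernel_eq_sum l n)]
    have := tendsto_finsetSum (range (n + 1)) fun k _ =>
      (Real.tendsto_pow_mul_exp_neg_atTop_nhds_zero (l + k)).const_mul
        ((n.choose k : ℝ) / (n : ℝ) ^ k)
    simpa using this
  obtain ⟨M, hM⟩ := Filter.eventually_atTop.mp (hlim.eventually_lt_const ht)
  refine isCompact_Icc.of_isClosed_subset (s := Set.Icc 0 M) ?_ ?_
  · exact (isClosed_le continuous_const continuous_id).inter
      (isClosed_le continuous_const (continuous_regretKernel l n))
  · rintro x ⟨hx, hxt⟩
    refine ⟨hx, le_of_not_gt fun hMx => ?_⟩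
    exact absurd (hM x hMx.le) (not_lt.mpr hxt)

theorem integral_regretKernel (l n : ℕ) :
    ∫ x in Set.Ici 0, regretKernel l n x = l.factorial * regret (l + 2) n := by
  rw [funext (regretKernel_eq_sum l n), MeasureTheory.integral_finsetSum _
    fun k _ => (integrableOn_pow_mul_exp_neg (l + k)).const_mul _]
  simp_rw [MeasureTheory.integral_const_mul, integral_pow_mul_exp_neg]
  rw [regret_eq_sum, ← Finset.Nat.sum_antidiagonal_swap]
  simp only [Prod.fst_swap, Prod.snd_swap]
  rw [Finset.Nat.sum_antidiagonal_eq_sum_range_succ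
    (f := fun k q => ((n : ℝ) ^ q / q.factorial) * ((l + k).choose k : ℝ)),
    Finset.mul_sum, Finset.mul_sum]
  refine Finset.sum_congr rfl fun k hk => ?_
  have hk' : k ≤ n := by simpa [Nat.lt_succ_iff] using hk
  rw [Nat.cast_choose ℝ hk', ← Nat.choose_symm_add, Nat.cast_add_choose]
  rcases Nat.eq_zero_or_pos n with rfl | hn
  · obtain rfl : k = 0 := by omega
    have hl : (l.factorial : ℝ) ≠ 0 := by positivity
    simp [hl]
  · have hpow : (n : ℝ) ^ n = (n : ℝ) ^ k * (n : ℝ) ^ (n - k) := by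
      rw [← pow_add, Nat.add_sub_cancel' hk']
    have hn' : (n : ℝ) ≠ 0 := by positivity
    rw [hpow]
    field_simp

/-! ### Joint log-concavity of the kernel -/

/-- Weighted AM-GM: `(m, x) ↦ m * log (1 + x / m)` is the perspective of a concave function, hence
jointly concave. -/
theorem one_add_div_pow_mul_le (m : ℕ) {x y : ℝ} (hx : 0 ≤ x) (hy : 0 ≤ y) :
    (1 + x / m) ^ m * (1 + y / (m + 2 : ℕ)) ^ (m + 2) ≤
      ((1 + (x + y) / 2 / (m + 1 : ℕ)) ^ (m + 1)) ^ 2 := by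
  set a := 1 + x / m with ha
  set b := 1 + y / (m + 2 : ℕ) with hb
  have ha0 : 0 ≤ a := by positivity
  have hb0 : 0 ≤ b := by positivity
  set w : ℝ := 1 / (2 * (m + 1)) with hw
  have hw0 : 0 < w := by positivity
  have hamgm := Real.geom_mean_le_arith_mean2_weighted (w₁ := m * w) (w₂ := (m + 2) * w)
    (by positivity) (by positivity) ha0 hb0 (by rw [hw]; field_simp; ring)
  -- Only an inequality: for `m = 0` the quotient `x / m` is `0` and the term `x` is lost.
  have hma : m * a ≤ m + x := by
    rcases Nat.eq_zero_or_pos m with rfl | hm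
    · simpa using hx
    · have : (m : ℝ) ≠ 0 := by positivity
      rw [ha]; field_simp; rfl
  have hmb : (m + 2) * b = m + 2 + y := by
    rw [hb]; push_cast; field_simp
  have hmean : m * w * a + (m + 2) * w * b ≤ 1 + (x + y) / 2 / (m + 1 : ℕ) := by
    calc m * w * a + (m + 2) * w * b = (m * a + (m + 2) * b) * w := by ring
      _ ≤ (m + x + (m + 2 + y)) * w := by rw [hmb]; gcongr
      _ = _ := by rw [hw]; push_cast; field_simp; ring
  have hroot : ∀ (c : ℝ) (k : ℕ), 0 ≤ c → (c ^ ((k : ℝ) * w)) ^ (2 * (m + 1)) = c ^ k := by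
    intro c k hc
    rw [← Real.rpow_natCast, ← Real.rpow_mul hc]
    have : (k : ℝ) * w * ((2 * (m + 1) : ℕ) : ℝ) = k := by
      rw [hw]; push_cast; field_simp
    rw [this, Real.rpow_natCast]
  have h1 := hroot a m ha0
  have h2 := hroot b (m + 2) hb0
  push_cast at h2
  rw [← h1, ← h2, ← mul_pow, ← pow_mul, mul_comm (m + 1) 2]
  exact pow_le_pow_left₀ (by positivity) (hamgm.trans hmean) _

/-- Midpoint log-concavity of the kernel, jointly in the sample size and `x`. -/
theorem regretKernel_mul_le (l m : ℕ) (x y : ℝ) (hx : 0 ≤ x) (hy : 0 ≤ y) :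
    regretKernel l m x * regretKernel l (m + 2) y ≤ regretKernel l (m + 1) ((x + y) / 2) ^ 2 := by
  have h1 : x ^ l * y ^ l ≤ (((x + y) / 2) ^ l) ^ 2 := by
    rw [← mul_pow, ← pow_mul, mul_comm l 2, pow_mul]
    exact pow_le_pow_left₀ (by positivity) (by nlinarith [sq_nonneg (x - y)]) l
  have h2 : Real.exp (-x) * Real.exp (-y) = Real.exp (-((x + y) / 2)) ^ 2 := by
    rw [← Real.exp_add, ← Real.exp_nat_mul]
    congr 1
    push_cast
    ring
  have h3 := one_add_div_pow_mul_le m hx hy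
  calc regretKernel l m x * regretKernel l (m + 2) y
      = (x ^ l * y ^ l) * (Real.exp (-x) * Real.exp (-y)) *
          ((1 + x / m) ^ m * (1 + y / (m + 2 : ℕ)) ^ (m + 2)) := by
        unfold regretKernel; ring
    _ ≤ (((x + y) / 2) ^ l) ^ 2 * Real.exp (-((x + y) / 2)) ^ 2 *
          ((1 + (x + y) / 2 / (m + 1 : ℕ)) ^ (m + 1)) ^ 2 := by
        rw [h2]; gcongr
    _ = _ := by unfold regretKernel; ring

/-- For `L ≥ 2`, the multinomial NML regret is log-concave in the sample size:
for `n ≥ 1`, `R(L, n−1) · R(L, n+1) ≤ R(L, n)²`. -/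
theorem regret_log_concave (L : ℕ) (hL : 2 ≤ L) (n : ℕ) (hn : 1 ≤ n) :
    regret L (n - 1) * regret L (n + 1) ≤ regret L n ^ 2 := by
  obtain ⟨l, rfl⟩ := Nat.exists_eq_add_of_le' hL
  obtain ⟨m, rfl⟩ := Nat.exists_eq_add_of_le' hn
  have h := integral_mul_integral_le_sq (regretKernel l m) (regretKernel l (m + 2))
    (regretKernel l (m + 1)) (continuous_regretKernel _ _) (continuous_regretKernel _ _)
    (continuous_regretKernel _ _) (regretKernel_nonneg _ _) (regretKernel_nonneg _ _)
    (regretKernel_nonneg _ _) (isCompact_regretKernel_superlevel _ _)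
    (isCompact_regretKernel_superlevel _ _) (integrableOn_regretKernel _ _)
    (integrableOn_regretKernel _ _) (integrableOn_regretKernel _ _)
    ⟨1, zero_le_one, regretKernel_one_pos _ _⟩ ⟨1, zero_le_one, regretKernel_one_pos _ _⟩
    (regretKernel_mul_le l m)
  simp only [integral_regretKernel] at h
  have hl : (0 : ℝ) < l.factorial ^ 2 := by positivity
  rw [Nat.add_sub_cancel]
  refine le_of_mul_le_mul_left ?_ hl
  calc _ = _ := by ring
    _ ≤ _ := h
    _ = _ := by ring
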